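/- arXiv:2003.13132 — 3 statements merged into one kernel-verified Lean document; each statement's English description precedes it below -/
import Mathlib

section
/- Suppose m = m(n), n = 1, 2, …, is a sequence of positive integers such that m(n)/(β ln n) → 1 as n → ∞, where β > 0 is a fixed constant, and let α be the unique solution of α − β·ln α = β − β·ln β + 1 in the interval (β, ∞). Then there exist two sequences a₁ = a₁(n) → 0 and a₂ = a₂(n) → 0 with a₁(n) < a₂(n) such that: if χ₁(n) := α·ln n + a₁(n)·ln n then n·S_m(χ₁)·e^{−χ₁} → ∞ as n → ∞, while if χ₂(n) := α·ln n + a₂(n)·ln n then n·S_m(χ₂)·e^{−χ₂} → 0 as n → ∞. -/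
/-!
Put `L = log n` and `G c = 1 + β - c + β log (c / β)`. The defining equation of `α` says `G α = 0`,
and `G` is strictly decreasing on `(β, ∞)`. For each fixed `c > β`, the quantity
`n * S (m n) (c L) * exp (-c L)` is `exp ((G c + o(1)) L)`:

* from above, the Chernoff-type bound `S m (r z) ≤ r ^ m * exp z` for `r ≥ 1`, with `r = c / β`
  and `z = β L` (`S_le`);
* from below, the last term `y ^ k / k!`, `k = m - 1`, of the sum, with the elementary Stirling bound
  `log k! ≤ k log k - k + 1 + log k` (`log_factorial_le`).

So for every fixed small `ε > 0` the quantity tends to `∞` at `c = α - ε` and to `0` at `c = α + ε`.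
A diagonal argument (`exists_diagonal`) then lets `ε` tend to `0` with `n`.
-/

open MeasureTheory Filter Real

/-- `S m y = ∑_{l=0}^{m-1} y^l / l!`, the `m`-th partial sum of the Taylor series of `e^y`. -/
noncomputable def S (m : ℕ) (y : ℝ) : ℝ := ∑ l ∈ Finset.range m, y ^ l / (Nat.factorial l)

lemma log_factorial_le (k : ℕ) (hk : 1 ≤ k) :
    Real.log (k.factorial : ℝ) ≤ k * Real.log k - k + 1 + Real.log k := by
  induction k, hk using Nat.le_induction with
  | base => simp
  | succ k hk ih =>
    have hk0 : (0 : ℝ) < k := by exact_mod_cast hk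
    have hk1 : (0 : ℝ) < (k : ℝ) + 1 := by positivity
    rw [Nat.factorial_succ]
    push_cast
    rw [Real.log_mul hk1.ne' (by positivity)]
    -- `log (k + 1) - log k ≥ 1 / (k + 1)`
    have h1 : Real.log (k / (k + 1)) ≤ k / (k + 1) - 1 :=
      Real.log_le_sub_one_of_pos (by positivity)
    rw [Real.log_div hk0.ne' hk1.ne'] at h1
    have h2 : ((k : ℝ) / (k + 1) - 1) * (k + 1) = -1 := by field_simp; ring
    have h3 := mul_le_mul_of_nonneg_right h1 hk1.le
    rw [h2] at h3
    nlinarith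

lemma S_nonneg (m : ℕ) {y : ℝ} (hy : 0 ≤ y) : 0 ≤ S m y :=
  Finset.sum_nonneg fun _ _ => by positivity

lemma S_le (m : ℕ) {r z : ℝ} (hr : 1 ≤ r) (hz : 0 ≤ z) :
    S m (r * z) ≤ r ^ m * Real.exp z := by
  calc S m (r * z) ≤ ∑ l ∈ Finset.range m, r ^ m * (z ^ l / (Nat.factorial l)) := by
        refine Finset.sum_le_sum fun l hl => ?_
        rw [mul_pow, mul_div_assoc]
        gcongr
        exact (Finset.mem_range.1 hl).le
    _ = r ^ m * ∑ l ∈ Finset.range m, z ^ l / (Nat.factorial l) := by rw [Finset.mul_sum]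
    _ ≤ r ^ m * Real.exp z := by
        gcongr
        exact Real.sum_le_exp_of_nonneg hz m

lemma le_S (m : ℕ) (hm : 0 < m) {y : ℝ} (hy : 0 ≤ y) :
    y ^ (m - 1) / ((m - 1).factorial : ℝ) ≤ S m y :=
  Finset.single_le_sum (f := fun l : ℕ => y ^ l / (l.factorial : ℝ))
    (fun _ _ => by positivity) (Finset.mem_range.2 (by omega))

/-- The function `c ↦ c - β log c` is strictly increasing on `(β, ∞)`. -/
lemma mul_log_sub_lt {β x y : ℝ} (hβ : 0 < β) (hx : β < x) (hxy : x < y) :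
    β * (Real.log y - Real.log x) < y - x := by
  have hx0 : 0 < x := hβ.trans hx
  have hy0 : 0 < y := hx0.trans hxy
  have h := Real.log_le_sub_one_of_pos (div_pos hy0 hx0)
  rw [Real.log_div hy0.ne' hx0.ne'] at h
  have h2 : (y / x - 1) * x = y - x := by field_simp
  have h3 : 0 < y / x - 1 := by rw [sub_pos, one_lt_div hx0]; exact hxy
  calc β * (Real.log y - Real.log x) ≤ β * (y / x - 1) := by gcongr
    _ < x * (y / x - 1) := by gcongr
    _ = y - x := by rw [mul_comm, h2]

/-- Diagonal extraction: if each `P j` holds eventually, then some `J n → ∞` satisfies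
`P (J n) n` eventually. -/
lemma exists_diagonal (P : ℕ → ℕ → Prop) (h : ∀ j, ∀ᶠ n in atTop, P j n) :
    ∃ J : ℕ → ℕ, Tendsto J atTop atTop ∧ ∀ᶠ n in atTop, P (J n) n := by
  classical
  have key : ∀ j, ∀ᶠ n in atTop, j ≤ Nat.findGreatest (fun i => P i n) n := fun j => by
    filter_upwards [h j, eventually_ge_atTop j] with n hn hj
    exact Nat.le_findGreatest hj hn
  refine ⟨fun n => Nat.findGreatest (fun i => P i n) n, tendsto_atTop.2 key, ?_⟩
  filter_upwards [key 1] with n hn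
  exact Nat.findGreatest_of_ne_zero (P := fun i => P i n) rfl (by omega)

lemma tendsto_log_nat : Tendsto (fun n : ℕ => Real.log n) atTop atTop :=
  Real.tendsto_log_atTop.comp tendsto_natCast_atTop_atTop

lemma tendsto_ratio {β : ℝ} (hβ : 0 < β) {m : ℕ → ℕ}
    (hcrit : Tendsto (fun n : ℕ => (m n : ℝ) / (β * Real.log n)) atTop (nhds 1)) :
    Tendsto (fun n : ℕ => (m n : ℝ) / Real.log n) atTop (nhds β) := by
  have h := hcrit.const_mul β
  rw [mul_one] at h
  refine h.congr fun n => ?_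
  field_simp

/-- Where the exponent `G c` is negative, which for `c > β` means `c > α`, the quantity tends to
zero. -/
lemma tendsto_zero_of_lt {β : ℝ} (hβ : 0 < β) {m : ℕ → ℕ}
    (hr : Tendsto (fun n : ℕ => (m n : ℝ) / Real.log n) atTop (nhds β))
    {c : ℝ} (hc : β < c) (hG : 1 + β - c + β * (Real.log c - Real.log β) < 0) :
    Tendsto (fun n : ℕ => (n : ℝ) * S (m n) (c * Real.log n) * Real.exp (-(c * Real.log n)))
      atTop (nhds 0) := by
  have hc0 : 0 < c := hβ.trans hc
  have hlim : Tendsto (fun n : ℕ => 1 + β - c + (m n : ℝ) / Real.log n *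
      (Real.log c - Real.log β)) atTop (nhds (1 + β - c + β * (Real.log c - Real.log β))) :=
    (hr.mul_const _).const_add _
  have hE := Real.tendsto_exp_atBot.comp (tendsto_log_nat.atTop_mul_neg hG hlim)
  refine squeeze_zero' ?_ ?_ hE
  · filter_upwards [tendsto_log_nat.eventually_gt_atTop 0] with n hL
    have := S_nonneg (m n) (mul_pos hc0 hL).le
    positivity
  · filter_upwards [tendsto_log_nat.eventually_gt_atTop 0, eventually_gt_atTop 0] with n hL hn
    have hn0 : (0 : ℝ) < n := by exact_mod_cast hn
    have hS := S_le (m n) (r := c / β) (z := β * Real.log n) ((one_le_div hβ).2 hc.le)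
      (mul_pos hβ hL).le
    rw [show c / β * (β * Real.log n) = c * Real.log n by field_simp] at hS
    calc (n : ℝ) * S (m n) (c * Real.log n) * Real.exp (-(c * Real.log n))
        ≤ n * ((c / β) ^ m n * Real.exp (β * Real.log n)) * Real.exp (-(c * Real.log n)) := by
          gcongr
      _ = Real.exp (Real.log n) * (Real.exp (m n * Real.log (c / β)) *
            Real.exp (β * Real.log n)) * Real.exp (-(c * Real.log n)) := by
          rw [Real.exp_log hn0, Real.exp_nat_mul, Real.exp_log (by positivity)]
      _ = _ := by
          rw [← Real.exp_add, ← Real.exp_add, ← Real.exp_add, Function.comp_apply,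
            Real.log_div hc0.ne' hβ.ne']
          congr 1
          field_simp
          ring

/-- Where the exponent `G c` is positive, in particular for `c` in `(β, α)`, the quantity tends to
infinity. -/
lemma tendsto_atTop_of_gt {β : ℝ} (hβ : 0 < β) {m : ℕ → ℕ} (hm : ∀ n, 0 < m n)
    (hr : Tendsto (fun n : ℕ => (m n : ℝ) / Real.log n) atTop (nhds β))
    {c : ℝ} (hc0 : 0 < c) (hG : 0 < 1 + β - c + β * (Real.log c - Real.log β)) :
    Tendsto (fun n : ℕ => (n : ℝ) * S (m n) (c * Real.log n) * Real.exp (-(c * Real.log n)))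
      atTop atTop := by
  have hinv : Tendsto (fun n : ℕ => (Real.log n)⁻¹) atTop (nhds 0) :=
    tendsto_inv_atTop_zero.comp tendsto_log_nat
  have hk : Tendsto (fun n : ℕ => ((m n - 1 : ℕ) : ℝ) / Real.log n) atTop (nhds β) := by
    have h := hr.sub hinv
    rw [sub_zero] at h
    refine h.congr fun n => ?_
    rw [Nat.cast_sub (hm n)]
    push_cast
    ring
  have hkt : Tendsto (fun n : ℕ => ((m n - 1 : ℕ) : ℝ)) atTop atTop := by
    refine (hk.pos_mul_atTop hβ tendsto_log_nat).congr' ?_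
    filter_upwards [tendsto_log_nat.eventually_gt_atTop 0] with n hL
    field_simp
  have hlogk : Tendsto (fun n : ℕ => Real.log ((m n - 1 : ℕ) : ℝ) / ((m n - 1 : ℕ) : ℝ))
      atTop (nhds 0) :=
    Real.isLittleO_log_id_atTop.tendsto_div_nhds_zero.comp hkt
  have hlim : Tendsto (fun n : ℕ => 1 + ((m n - 1 : ℕ) : ℝ) / Real.log n - c
      + ((m n - 1 : ℕ) : ℝ) / Real.log n *
        (Real.log c - Real.log (((m n - 1 : ℕ) : ℝ) / Real.log n))
      - (Real.log n)⁻¹ - Real.log ((m n - 1 : ℕ) : ℝ) / ((m n - 1 : ℕ) : ℝ) *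
        (((m n - 1 : ℕ) : ℝ) / Real.log n)) atTop
      (nhds (1 + β - c + β * (Real.log c - Real.log β) - 0 - 0 * β)) :=
    ((((hk.const_add 1).sub_const c).add
      (hk.mul ((hk.log hβ.ne').const_sub _))).sub hinv).sub (hlogk.mul hk)
  rw [zero_mul, sub_zero, sub_zero] at hlim
  have hE := Real.tendsto_exp_atTop.comp (tendsto_log_nat.atTop_mul_pos hG hlim)
  refine tendsto_atTop_mono' _ ?_ hE
  filter_upwards [tendsto_log_nat.eventually_gt_atTop 0, eventually_gt_atTop 0,
    hkt.eventually_ge_atTop 1] with n hL hn hk1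
  have hn0 : (0 : ℝ) < n := by exact_mod_cast hn
  have hS := le_S (m n) (hm n) (mul_pos hc0 hL).le
  have hfac := log_factorial_le (m n - 1) (by exact_mod_cast hk1)
  rw [Function.comp_apply]
  generalize m n - 1 = k at *
  have hk0 : (0 : ℝ) < k := by linarith
  have hf0 : (0 : ℝ) < (k.factorial : ℝ) := by positivity
  calc _ ≤ Real.exp (Real.log n + (k * Real.log (c * Real.log n) - Real.log k.factorial)
            + -(c * Real.log n)) := by
        rw [Real.exp_le_exp, Real.log_div hk0.ne' hL.ne', Real.log_mul hc0.ne' hL.ne']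
        have h : ∀ L K : ℝ, Real.log n * (1 + k / Real.log n - c + k / Real.log n *
            (Real.log c - (K - L)) - (Real.log n)⁻¹ - K / k * (k / Real.log n))
            = Real.log n + k - c * Real.log n + k * (Real.log c + L) - k * K - 1 - K := by
          intro L K
          field_simp
          ring
        rw [h]
        linarith
    _ = n * ((c * Real.log n) ^ k / (k.factorial : ℝ)) * Real.exp (-(c * Real.log n)) := by
        rw [Real.exp_add, Real.exp_add, Real.exp_log hn0, Real.exp_sub, Real.exp_nat_mul,
          Real.exp_log (mul_pos hc0 hL), Real.exp_log hf0]
    _ ≤ _ := by gcongr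

/-- Lemma 1: if `m ∼ β ln n` and `α` is the unique solution of `α − β ln α = β − β ln β + 1`
in `(β, ∞)`, then there are sequences `a₁(n) → 0` and `a₂(n) → 0` with `a₁(n) < a₂(n)` such
that with `χᵢ(n) = α ln n + aᵢ(n) ln n`, one has `n S_m(χ₁) e^{−χ₁} → ∞` and
`n S_m(χ₂) e^{−χ₂} → 0`. -/
theorem stmt5 (β : ℝ) (hβ : 0 < β) (m : ℕ → ℕ) (hm : ∀ n, 0 < m n)
    (hcrit : Tendsto (fun n : ℕ => (m n : ℝ) / (β * Real.log n)) atTop (nhds 1))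
    (α : ℝ) (hαβ : β < α)
    (hα : α - β * Real.log α = β - β * Real.log β + 1) :
    ∃ a₁ a₂ : ℕ → ℝ,
      Tendsto a₁ atTop (nhds 0) ∧ Tendsto a₂ atTop (nhds 0) ∧ (∀ n, a₁ n < a₂ n) ∧
      Tendsto (fun n : ℕ =>
          (n : ℝ) * S (m n) (α * Real.log n + a₁ n * Real.log n)
            * Real.exp (-(α * Real.log n + a₁ n * Real.log n)))
        atTop atTop ∧
      Tendsto (fun n : ℕ =>
          (n : ℝ) * S (m n) (α * Real.log n + a₂ n * Real.log n)
            * Real.exp (-(α * Real.log n + a₂ n * Real.log n)))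
        atTop (nhds 0) := by
  have hr := tendsto_ratio hβ hcrit
  have hd : 0 < α - β := sub_pos.2 hαβ
  -- The denominator `j + 2` keeps `α - ε j` inside `(β, α)`, where the exponent is monotone.
  obtain ⟨ε, hε⟩ : ∃ ε : ℕ → ℝ, ε = fun j : ℕ => (α - β) / ((j : ℝ) + 2) := ⟨_, rfl⟩
  have hε0 : ∀ j, 0 < ε j := fun j => by rw [hε]; positivity
  have hεd : ∀ j, ε j < α - β := fun j => by
    rw [hε]
    exact div_lt_self hd (by have : (0 : ℝ) ≤ j := j.cast_nonneg; linarith)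
  have hεt : Tendsto ε atTop (nhds 0) := by
    rw [hε]
    exact (tendsto_natCast_atTop_atTop.atTop_add tendsto_const_nhds).const_div_atTop _
  let F : ℝ → ℕ → ℝ := fun c n =>
    (n : ℝ) * S (m n) (c * Real.log n) * Real.exp (-(c * Real.log n))
  have hlow : ∀ j, Tendsto (F (α - ε j)) atTop atTop := fun j => by
    have h1 : β < α - ε j := by linarith [hεd j]
    have := mul_log_sub_lt hβ h1 (show α - ε j < α by linarith [hε0 j])
    exact tendsto_atTop_of_gt hβ hm hr (hβ.trans h1) (by linarith)
  have hup : ∀ j, Tendsto (F (α + ε j)) atTop (nhds 0) := fun j => by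
    have := mul_log_sub_lt hβ hαβ (show α < α + ε j by linarith [hε0 j])
    exact tendsto_zero_of_lt hβ hr (by linarith [hε0 j]) (by linarith)
  obtain ⟨J, hJ, hP⟩ := exists_diagonal
    (fun j n => (j : ℝ) ≤ F (α - ε j) n ∧ F (α + ε j) n ≤ ε j) fun j =>
      ((hlow j).eventually_ge_atTop _).and ((hup j).eventually_le_const (hε0 j))
  have hεJ : Tendsto (fun n => ε (J n)) atTop (nhds 0) := hεt.comp hJ
  refine ⟨fun n => -ε (J n), fun n => ε (J n), by simpa using hεJ.neg, hεJ,
    fun n => by linarith [hε0 (J n)], ?_, ?_⟩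
  · refine tendsto_atTop_mono' _ ?_ (tendsto_natCast_atTop_atTop.comp hJ : Tendsto
      (fun n => ((J n : ℕ) : ℝ)) atTop atTop)
    filter_upwards [hP] with n hn
    rw [← add_mul, ← sub_eq_add_neg]
    exact hn.1
  · refine squeeze_zero' ?_ ?_ hεJ
    · filter_upwards [tendsto_log_nat.eventually_gt_atTop 0] with n hL
      rw [← add_mul]
      have := S_nonneg (m n) (y := (α + ε (J n)) * Real.log n)
        (mul_pos (by linarith [hε0 (J n)]) hL).le
      positivity
    · filter_upwards [hP] with n hn
      rw [← add_mul]
      exact hn.2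
end

section
/- Let m = m(n) be a sequence of positive integers with (ln n)³/m(n) → 0 as n → ∞ (i.e. m ≫ (ln n)³). For a fixed real y, set λ(n) := m + √m·√(2 ln n − ln ln n) + (√m/√(2 ln n))·y. Then [1 − S_m(λ(n))·e^{−λ(n)}]^n → exp(−e^{−y}/(2√π)) as n → ∞. Equivalently, the maximum Δ_{m,n} of n independent Erlang(m, 1/n) random variables satisfies: for every real y, P{(Δ_{m,n} − n·m − n·√m·√(2 ln n − ln ln n))/(n·√(m/(2 ln n))) ≤ y} → exp(−e^{−y}/(2√π)). -/
/-!
Write `p_n = S m λ * exp (-λ)` with `λ = m + √m x`, `x = xi y (ln n)`; this is the probability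
that a Poisson variable of mean `λ` is less than `m`. Since `(1 - p_n) ^ n → exp (-c)` as soon as
`n p_n → c`, it suffices to show `n p_n → exp (-y) / (2√π)`.

The terms of `S m λ`, read backwards from `l = m - 1`, are dominated by a geometric series of
ratio `m / λ`, which gives `S m λ ≤ m λ ^ m / (m! (λ - m))`; the loss is at most a factor
`1 - λ / (λ - m) ^ 2`, which tends to `1` (`S_le`, `le_S`). The Stirling formula and
`log (1 + u) = u - u² / 2 + O(u³)` at `u = x / √m` then give the Gaussian tail
`p_n ∼ exp (-x² / 2) / (x √(2π))` whenever `x → ∞` and `x³ / √m → 0` (`tail_ratio`). As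
`x ∼ √(2 ln n)`, the last condition is exactly `(ln n)³ / m → 0`. Finally
`x² / 2 = ln n - (ln ln n) / 2 + y + o(1)` gives `n exp (-x² / 2) / x → exp (-y) / √2`
(`tendsto_gauss`).
-/

open MeasureTheory Filter Real

/-! ### Geometric-series bounds for the partial sums -/

/-- Geometric-series upper bound for `S`. In the induction, both sides gain a common factor
`l ^ m / m!`, and the step reduces to `l / (l - m) ≤ l / (l - m - 1)`. -/
lemma S_le_s6 (m : ℕ) (l : ℝ) (h : (m : ℝ) < l) :
    S m l ≤ m * l ^ m / m.factorial * (1 / (l - m)) := by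
  induction m with
  | zero => simp [S]
  | succ m ih =>
    push_cast at h
    have ih := ih (by linarith)
    have hD : 0 < l - m - 1 := by linarith
    have hl : 0 < l := by have := m.cast_nonneg (α := ℝ); linarith
    have hD' : l - m ≠ 0 := by linarith
    have hf : (0 : ℝ) < m.factorial := by positivity
    have hm1 : (m : ℝ) + 1 ≠ 0 := by positivity
    have hS : S (m + 1) l = S m l + l ^ m / m.factorial := by simp [S, Finset.sum_range_succ]
    have e1 : m * l ^ m / m.factorial * (1 / (l - m)) + l ^ m / m.factorial
        = l ^ m / m.factorial * (l / (l - m)) := by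
      field_simp; ring
    have e2 : ((m + 1 : ℕ) : ℝ) * l ^ (m + 1) / (m + 1).factorial * (1 / (l - (m + 1 : ℕ)))
        = l ^ m / m.factorial * (l / (l - m - 1)) := by
      rw [Nat.factorial_succ]; push_cast; rw [← sub_sub, pow_succ]; field_simp
    rw [hS, e2]
    refine (add_le_add_left ih _).trans ?_
    rw [e1]
    have : l / (l - m) ≤ l / (l - m - 1) :=
      div_le_div_of_nonneg_left hl.le hD (by linarith)
    gcongr

/-- Second-order companion of `S_le`: the relative error of the geometric-series bound is at
most `l / (l - m) ^ 2`. With `l = m + D + 1`, the induction step reduces to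
`D ^ 2 * (D + 1) ≤ l * (3 * D ^ 2 + 3 * D + 1)`. -/
lemma le_S_s6 (m : ℕ) (l : ℝ) (h : (m : ℝ) < l) :
    m * l ^ m / m.factorial * (1 / (l - m)) * (1 - l / (l - m) ^ 2) ≤ S m l := by
  induction m with
  | zero => simp [S]
  | succ m ih =>
    push_cast at h
    have ih := ih (by linarith)
    have hm0 := m.cast_nonneg (α := ℝ)
    have hl : 0 < l := by linarith
    obtain ⟨D, rfl⟩ : ∃ D : ℝ, l = m + D + 1 := ⟨l - m - 1, by ring⟩
    have hD : 0 < D := by linarith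
    have hf : (0 : ℝ) < m.factorial := by positivity
    have hm1 : (m : ℝ) + 1 ≠ 0 := by positivity
    have hD1 : D + 1 ≠ 0 := by positivity
    set l : ℝ := m + D + 1 with hldef
    have hS : S (m + 1) l = S m l + l ^ m / m.factorial := by simp [S, Finset.sum_range_succ]
    have hsub : l - m = D + 1 := by rw [hldef]; ring
    rw [hsub] at ih
    have e1 : m * l ^ m / m.factorial * (1 / (D + 1)) * (1 - l / (D + 1) ^ 2)
          + l ^ m / m.factorial
        = l ^ m / m.factorial * (m * (1 / (D + 1)) * (1 - l / (D + 1) ^ 2) + 1) := by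
      ring
    have e2 : ((m + 1 : ℕ) : ℝ) * l ^ (m + 1) / (m + 1).factorial * (1 / (l - (m + 1 : ℕ)))
          * (1 - l / (l - (m + 1 : ℕ)) ^ 2)
        = l ^ m / m.factorial * (l * (1 / D) * (1 - l / D ^ 2)) := by
      have : l - (m + 1 : ℕ) = D := by push_cast; rw [hldef]; ring
      rw [this, Nat.factorial_succ, pow_succ l]; push_cast; field_simp
    rw [hS, e2]
    refine le_trans ?_ (add_le_add_left ih _)
    rw [e1]
    refine mul_le_mul_of_nonneg_left ?_ (by positivity)
    rw [← sub_nonneg]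
    have : (m * (1 / (D + 1)) * (1 - l / (D + 1) ^ 2) + 1) - l * (1 / D) * (1 - l / D ^ 2)
        = l * (l * (3 * D ^ 2 + 3 * D + 1) - D ^ 2 * (D + 1)) / (D ^ 3 * (D + 1) ^ 3) := by
      have hm : (m : ℝ) = l - D - 1 := by rw [hldef]; ring
      rw [hm]; field_simp; ring
    rw [this]
    have : 0 ≤ l * (3 * D ^ 2 + 3 * D + 1) - D ^ 2 * (D + 1) := by
      rw [hldef]
      have : 0 ≤ m * (3 * D ^ 2 + 3 * D + 1) := by positivity
      nlinarith [pow_pos hD 2, pow_pos hD 3]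
    positivity

/-! ### Asymptotics of the standardised threshold -/

/-- The standardised threshold as a function of `L = ln n`. -/
noncomputable def xi (y L : ℝ) : ℝ := √(2 * L - log L) + y / √(2 * L)

lemma tendsto_ratio_s6 : Tendsto (fun L : ℝ => √(2 * L - log L) / √(2 * L)) atTop (nhds 1) := by
  have h1 : Tendsto (fun L : ℝ => log L / L) atTop (nhds 0) :=
    Real.isLittleO_log_id_atTop.tendsto_div_nhds_zero
  have h2 : Tendsto (fun L : ℝ => √(1 - log L / L / 2)) atTop (nhds (√(1 - 0 / 2))) :=
    (tendsto_const_nhds.sub (h1.div_const 2)).sqrt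
  simp only [zero_div, sub_zero, sqrt_one] at h2
  refine h2.congr' ?_
  filter_upwards [eventually_gt_atTop 0] with L hL
  rw [← Real.sqrt_div' _ (by positivity)]
  congr 1
  field_simp

/-- `√(2L)` is the leading order of `xi y L`. -/
lemma tendsto_xi_div (y : ℝ) : Tendsto (fun L : ℝ => xi y L / √(2 * L)) atTop (nhds 1) := by
  have h3 : Tendsto (fun L : ℝ => y / (2 * L)) atTop (nhds 0) :=
    tendsto_const_nhds.div_atTop (tendsto_id.const_mul_atTop two_pos)
  have := tendsto_ratio_s6.add h3
  rw [add_zero] at this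
  refine this.congr' ?_
  filter_upwards [eventually_gt_atTop 0] with L hL
  have : √(2 * L) * √(2 * L) = 2 * L := Real.mul_self_sqrt (by positivity)
  rw [xi, add_div, div_div, this]

lemma tendsto_sqrt_two_mul : Tendsto (fun L : ℝ => √(2 * L)) atTop atTop :=
  tendsto_sqrt_atTop.comp (tendsto_id.const_mul_atTop two_pos)

lemma tendsto_xi (y : ℝ) : Tendsto (xi y) atTop atTop := by
  have := (tendsto_xi_div y).pos_mul_atTop one_pos tendsto_sqrt_two_mul
  refine this.congr' ?_
  filter_upwards [eventually_gt_atTop 0] with L hL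
  have : √(2 * L) ≠ 0 := by positivity
  field_simp

/-- The Gaussian tail `exp (-x² / 2) / x` at `x = xi y L` has exact order `exp (-L)`. -/
lemma tendsto_gauss (y : ℝ) :
    Tendsto (fun L : ℝ => exp (L - xi y L ^ 2 / 2) / xi y L) atTop (nhds (exp (-y) / √2)) := by
  have h3 : Tendsto (fun L : ℝ => y ^ 2 / (4 * L)) atTop (nhds 0) :=
    tendsto_const_nhds.div_atTop (tendsto_id.const_mul_atTop four_pos)
  have h4 := ((Real.continuous_exp.tendsto _).comp
    ((tendsto_ratio_s6.const_mul (-y)).sub h3)).div (tendsto_xi_div y) one_ne_zero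
  have h5 := h4.div_const √2
  have e : exp (-y * 1 - 0) / 1 / √2 = exp (-y) / √2 := by simp
  rw [e] at h5
  refine h5.congr' ?_
  have hlog : ∀ᶠ L : ℝ in atTop, log L ≤ L :=
    (eventually_gt_atTop 0).mono fun L hL => (log_le_sub_one_of_pos hL).trans (by linarith)
  filter_upwards [eventually_gt_atTop 0, hlog, (tendsto_xi y).eventually_gt_atTop 0]
    with L hL hl hx
  have hs : √(2 * L) ≠ 0 := by positivity
  have hs2 : √(2 * L) ^ 2 = 2 * L := Real.sq_sqrt (by positivity)
  have ha2 : √(2 * L - log L) ^ 2 = 2 * L - log L := Real.sq_sqrt (by linarith)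
  have hsL : exp (log L / 2) = √L := by
    rw [← log_sqrt hL.le, exp_log (by positivity)]
  have hexp : L - xi y L ^ 2 / 2
      = log L / 2 + (-y * (√(2 * L - log L) / √(2 * L)) - y ^ 2 / (4 * L)) := by
    rw [xi, add_sq, ha2, div_pow, hs2]
    field_simp
    ring
  have h2 : √(2 * L) = √2 * √L := Real.sqrt_mul (by norm_num) _
  rw [hexp, exp_add, hsL]
  simp only [Function.comp, Pi.div_apply]
  generalize exp _ = E
  rw [h2]
  field_simp

/-! ### Gaussian tail of the Poisson distribution -/

/-- The Stirling formula as a ratio of the two sides. -/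
lemma stirling_ratio :
    Tendsto (fun k : ℕ => √(2 * k * π) * (k / exp 1) ^ k / (k.factorial : ℝ)) atTop (nhds 1) := by
  have h := Stirling.factorial_isEquivalent_stirling.symm
  exact (Asymptotics.isEquivalent_iff_tendsto_one
    (Eventually.of_forall fun k => by positivity)).1 h

/-- Moderate deviations: for `x → ∞` with `x³ / √m → 0`, the Poisson lower tail
`S m l * exp (-l)` at `l = m + √m x` is asymptotic to `exp (-x² / 2) / (x √(2π))`. -/
lemma tail_ratio (m : ℕ → ℕ) (x : ℕ → ℝ) (hm : Tendsto m atTop atTop)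
    (hx : Tendsto x atTop atTop)
    (h3 : Tendsto (fun n => x n ^ 3 / √(m n)) atTop (nhds 0)) :
    Tendsto (fun n => S (m n) (m n + √(m n) * x n) * exp (-(m n + √(m n) * x n))
      / (exp (-(x n ^ 2 / 2)) / x n)) atTop (nhds (1 / √(2 * π))) := by
  have hsm : Tendsto (fun n => √(m n : ℝ)) atTop atTop :=
    tendsto_sqrt_atTop.comp (tendsto_natCast_atTop_atTop.comp hm)
  have hu : Tendsto (fun n => x n / √(m n)) atTop (nhds 0) := by
    have := h3.div_atTop ((tendsto_pow_atTop two_ne_zero).comp hx)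
    refine this.congr' ?_
    filter_upwards [hx.eventually_gt_atTop 0] with n hn
    simp only [Function.comp]
    field_simp
  -- the cubic Taylor remainder of the logarithm, multiplied by `m`
  have herr : Tendsto (fun n => m n * (log (1 + x n / √(m n)) - x n / √(m n)) + x n ^ 2 / 2)
      atTop (nhds 0) := by
    have hb : Tendsto (fun n => 2 * (x n ^ 3 / √(m n))) atTop (nhds 0) := by
      simpa using h3.const_mul 2
    refine squeeze_zero_norm' ?_ hb
    filter_upwards [hx.eventually_gt_atTop 0, hsm.eventually_gt_atTop 0,
      hu.eventually_lt_const (show (0 : ℝ) < 1 / 2 by norm_num)] with n hn hs hun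
    have hs2 : √(m n : ℝ) ^ 2 = m n := Real.sq_sqrt (Nat.cast_nonneg _)
    rw [← hs2]
    generalize √(m n : ℝ) = s at *
    rw [Real.sqrt_sq hs.le] at *
    have hu0 : 0 < x n / s := by positivity
    have hxs : x n = s * (x n / s) := by field_simp
    generalize x n / s = u at *
    have key := Real.abs_log_sub_add_sum_range_le (x := -u)
      (by rw [abs_neg, abs_of_pos hu0]; linarith) 2
    rw [abs_neg, abs_of_pos hu0] at key
    simp only [Finset.sum_range_succ, Finset.sum_range_zero] at key
    norm_num at key
    have hk : u ^ 3 / (1 - u) ≤ 2 * u ^ 3 := by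
      rw [div_le_iff₀ (by linarith)]
      nlinarith [pow_pos hu0 3]
    have e1 : s ^ 2 * (log (1 + u) - u) + x n ^ 2 / 2
        = s ^ 2 * (-u + u ^ 2 / 2 + log (1 + u)) := by rw [hxs]; ring
    have e2 : 2 * (x n ^ 3 / s) = s ^ 2 * (2 * u ^ 3) := by rw [hxs]; field_simp
    rw [e1, e2, Real.norm_eq_abs, abs_mul, abs_of_pos (by positivity : 0 < s ^ 2)]
    gcongr
    exact key.trans hk
  have hmain : Tendsto (fun n => (√(2 * (m n : ℕ) * π) * ((m n : ℕ) / exp 1) ^ (m n)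
        / ((m n).factorial : ℝ))
      * exp (m n * (log (1 + x n / √(m n)) - x n / √(m n)) + x n ^ 2 / 2) / √(2 * π))
      atTop (nhds (1 / √(2 * π))) := by
    have := ((stirling_ratio.comp hm).mul ((Real.continuous_exp.tendsto _).comp herr)).div_const
      √(2 * π)
    simpa [Function.comp_def] using this
  have hth : Tendsto (fun n => 1 - (m n + √(m n) * x n) / (√(m n) * x n) ^ 2) atTop (nhds 1) := by
    have ha : Tendsto (fun n => 1 / x n ^ 2) atTop (nhds 0) :=
      tendsto_const_nhds.div_atTop ((tendsto_pow_atTop two_ne_zero).comp hx)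
    have hb : Tendsto (fun n => 1 / (√(m n) * x n)) atTop (nhds 0) :=
      tendsto_const_nhds.div_atTop (hsm.atTop_mul_atTop₀ hx)
    have := (tendsto_const_nhds (x := (1 : ℝ))).sub (ha.add hb)
    simp only [add_zero, sub_zero] at this
    refine this.congr' ?_
    filter_upwards [hx.eventually_gt_atTop 0, hsm.eventually_gt_atTop 0] with n hn hs
    have hs2 : √(m n : ℝ) ^ 2 = m n := Real.sq_sqrt (Nat.cast_nonneg _)
    rw [← hs2]
    generalize √(m n : ℝ) = s at *
    rw [Real.sqrt_sq hs.le]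
    field_simp
  have hlow := hmain.mul hth
  rw [mul_one] at hlow
  -- the leading term of `S_le` and `le_S`, rewritten through `stirling_ratio`
  have hform : ∀ᶠ n in atTop, ((m n : ℝ) * (m n + √(m n) * x n) ^ (m n) / (m n).factorial
        * (1 / (√(m n) * x n))) * exp (-(m n + √(m n) * x n)) / (exp (-(x n ^ 2 / 2)) / x n)
      = (√(2 * (m n : ℕ) * π) * ((m n : ℕ) / exp 1) ^ (m n) / ((m n).factorial : ℝ))
      * exp (m n * (log (1 + x n / √(m n)) - x n / √(m n)) + x n ^ 2 / 2) / √(2 * π) := by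
    filter_upwards [hx.eventually_gt_atTop 0, hsm.eventually_gt_atTop 0] with n hn hs
    have hs2 : √(m n : ℝ) ^ 2 = m n := Real.sq_sqrt (Nat.cast_nonneg _)
    have hm0 : (0 : ℝ) < m n := by rw [← hs2]; positivity
    have hu0 : 0 < 1 + x n / √(m n) := by positivity
    have a2 : (m n : ℝ) * (x n / √(m n)) = √(m n) * x n := by
      nth_rw 1 [← hs2]; field_simp
    have a1 : (m n : ℝ) + √(m n) * x n = m n * (1 + x n / √(m n)) := by
      rw [mul_add, mul_one, a2]
    have a3 : √(2 * (m n : ℕ) * π) = √(m n) * √(2 * π) := by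
      rw [← Real.sqrt_mul hm0.le]; congr 1; ring
    have a4 : exp (m n * (log (1 + x n / √(m n)) - x n / √(m n)) + x n ^ 2 / 2)
        = (1 + x n / √(m n)) ^ (m n) * exp (-(√(m n) * x n)) * exp (x n ^ 2 / 2) := by
      rw [mul_sub, a2, exp_add, sub_eq_add_neg, exp_add, exp_nat_mul, exp_log hu0]
    have a5 : exp (-(m n + √(m n) * x n)) = exp (-(√(m n) * x n)) / exp 1 ^ (m n) := by
      rw [← exp_nat_mul, ← exp_sub]; congr 1; ring
    have a6 : exp (-(x n ^ 2 / 2)) = 1 / exp (x n ^ 2 / 2) := by rw [exp_neg, one_div]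
    rw [a5, a4, a3, a6, a1, mul_pow, div_pow]
    have hp : √(2 * π) ≠ 0 := by positivity
    have hf : ((m n).factorial : ℝ) ≠ 0 := by positivity
    have hgen : (m n : ℝ) = √(m n) * √(m n) := by rw [← sq, hs2]
    generalize exp (-(√(m n) * x n)) = E1
    have hE2 : exp (x n ^ 2 / 2) ≠ 0 := (exp_pos _).ne'
    generalize exp (x n ^ 2 / 2) = E2 at *
    have hE3 : exp 1 ^ (m n) ≠ 0 := by positivity
    generalize exp 1 ^ (m n) = E3 at *
    generalize (1 + x n / √(m n)) ^ (m n) = A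
    generalize (m n : ℝ) ^ (m n) = B
    generalize ((m n).factorial : ℝ) = F at *
    nth_rw 1 [hgen]
    field_simp
  have hpos : ∀ᶠ n in atTop, (m n : ℝ) < m n + √(m n) * x n := by
    filter_upwards [hx.eventually_gt_atTop 0, hsm.eventually_gt_atTop 0] with n hn hs
    have : 0 < √(m n) * x n := by positivity
    linarith
  refine tendsto_of_tendsto_of_tendsto_of_le_of_le' hlow hmain ?_ ?_
  · filter_upwards [hform, hpos, hx.eventually_gt_atTop 0] with n hf hp hn
    have := le_S_s6 _ _ hp
    rw [add_sub_cancel_left] at this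
    rw [← hf]
    calc _ = (m n * (m n + √(m n) * x n) ^ (m n) / (m n).factorial
        * (1 / (√(m n) * x n))) * (1 - (m n + √(m n) * x n) / (√(m n) * x n) ^ 2)
          * exp (-(m n + √(m n) * x n)) / (exp (-(x n ^ 2 / 2)) / x n) := by ring
      _ ≤ _ := by gcongr
  · filter_upwards [hform, hpos, hx.eventually_gt_atTop 0] with n hf hp hn
    have := S_le_s6 _ _ hp
    rw [add_sub_cancel_left] at this
    rw [← hf]
    gcongr

/-! ### Convergence to the Gumbel law -/

/-- Supercritical case `m ≫ (ln n)³`: with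
`λ(n) = m + √m √(2 ln n − ln ln n) + (√m/√(2 ln n)) y`, one has
`[1 − S_m(λ) e^{−λ}]^n → exp(−e^{−y}/(2√π))`; since `[1 − S_m(t/n) e^{−t/n}]^n` is the
distribution function of the maximum `Δ_{m,n}` of `n` independent Erlang(m, 1/n) random
variables, this says
`P{(Δ_{m,n} − nm − n√m √(2 ln n − ln ln n))/(n √(m/(2 ln n))) ≤ y} → exp(−e^{−y}/(2√π))`. -/
theorem stmt6 (m : ℕ → ℕ) (hm : ∀ n, 0 < m n)
    (hgrow : Tendsto (fun n : ℕ => (Real.log n) ^ 3 / (m n : ℝ)) atTop (nhds 0))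
    (y : ℝ) :
    Tendsto (fun n : ℕ =>
        (1 - S (m n)
            ((m n : ℝ) + Real.sqrt (m n) * Real.sqrt (2 * Real.log n - Real.log (Real.log n))
              + Real.sqrt (m n) / Real.sqrt (2 * Real.log n) * y)
          * Real.exp
            (-((m n : ℝ) + Real.sqrt (m n) * Real.sqrt (2 * Real.log n - Real.log (Real.log n))
              + Real.sqrt (m n) / Real.sqrt (2 * Real.log n) * y))) ^ n)
      atTop (nhds (Real.exp (-(Real.exp (-y)) / (2 * Real.sqrt π)))) := by
  have hL : Tendsto (fun n : ℕ => Real.log n) atTop atTop :=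
    tendsto_log_atTop.comp tendsto_natCast_atTop_atTop
  have hx := (tendsto_xi y).comp hL
  have hmR : Tendsto (fun n => (m n : ℝ)) atTop atTop := by
    have hinv : Tendsto (fun n => (m n : ℝ) / Real.log n ^ 3) atTop atTop := by
      refine (Tendsto.inv_tendsto_nhdsGT_zero (f := fun n : ℕ => Real.log n ^ 3 / (m n : ℝ))
        (tendsto_nhdsWithin_iff.2 ⟨hgrow, ?_⟩)).congr fun n => by simp
      filter_upwards [hL.eventually_gt_atTop 0] with n hn
      have : (0 : ℝ) < m n := by exact_mod_cast hm n
      exact div_pos (pow_pos hn 3) this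
    refine (hinv.atTop_mul_atTop₀ ((tendsto_pow_atTop three_ne_zero).comp hL)).congr' ?_
    filter_upwards [hL.eventually_gt_atTop 0] with n hn
    simp only [Function.comp]
    field_simp
  have hmN : Tendsto m atTop atTop := tendsto_natCast_atTop_iff.1 hmR
  have h3 : Tendsto (fun n : ℕ => xi y (Real.log n) ^ 3 / √(m n)) atTop (nhds 0) := by
    have h := (((tendsto_xi_div y).comp hL).pow 3).mul ((hgrow.const_mul 8).sqrt)
    simp only [mul_zero, sqrt_zero] at h
    refine h.congr' ?_
    filter_upwards [hL.eventually_gt_atTop 0] with n hn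
    have e : √(8 * (Real.log n ^ 3 / m n)) = √(2 * Real.log n) ^ 3 / √(m n) := by
      rw [← mul_div_assoc, Real.sqrt_div (by positivity)]
      congr 1
      rw [Real.sqrt_eq_iff_mul_self_eq (by positivity) (by positivity)]
      have : √(2 * Real.log n) ^ 2 = 2 * Real.log n := Real.sq_sqrt (by positivity)
      calc _ = (2 * Real.log n) ^ 3 := by ring
        _ = _ := by nth_rw 1 [← this]; ring
    have hs : √(2 * Real.log n) ≠ 0 := by positivity
    simp only [Function.comp]
    rw [e]
    field_simp
  have hprod := (tail_ratio m _ hmN hx h3).mul ((tendsto_gauss y).comp hL)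
  have hlam : ∀ n : ℕ, (m n : ℝ) + √(m n) * √(2 * Real.log n - Real.log (Real.log n))
      + √(m n) / √(2 * Real.log n) * y = m n + √(m n) * xi y (Real.log n) := fun n => by
    rw [xi]; ring
  simp only [hlam]
  have hnp : Tendsto (fun n : ℕ => (n : ℝ) * -(S (m n) (m n + √(m n) * xi y (Real.log n))
      * exp (-(m n + √(m n) * xi y (Real.log n))))) atTop
      (nhds (-(Real.exp (-y)) / (2 * √π))) := by
    have e : -(1 / √(2 * π) * (exp (-y) / √2)) = -(Real.exp (-y)) / (2 * √π) := by
      have : √(2 : ℝ) ^ 2 = 2 := Real.sq_sqrt (by norm_num)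
      rw [Real.sqrt_mul (by norm_num)]
      nth_rw 3 [← this]
      field_simp
    rw [← e]
    refine hprod.neg.congr' ?_
    filter_upwards [eventually_gt_atTop 0, hx.eventually_gt_atTop 0] with n hn hxn
    have hn' : (0 : ℝ) < n := by exact_mod_cast hn
    simp only [Function.comp] at hxn ⊢
    rw [sub_eq_add_neg, exp_add, exp_log hn']
    have := (exp_pos (-(xi y (Real.log n) ^ 2 / 2))).ne'
    field_simp
  simpa only [sub_eq_add_neg] using Real.tendsto_one_add_pow_exp_of_tendsto hnp
end

section
/- Let β > 0 be fixed, let α be the unique solution in (β, ∞) of α − β·ln α = β − β·ln β + 1, let m = m(n) = β·ln n + b(n)·ln n be a sequence of positive integers with b(n)·√(ln n) → 0 as n → ∞, and let y be a fixed real number. Set χ(n) := α·ln n + (α(α−β−1)/(β(α−β)))·b(n)·ln n − (α/(2(α−β)))·ln ln n + (α/(α−β))·y. Then n·S_m(χ(n))·e^{−χ(n)} → (1/√(2π))·(√β/(α−β))·e^{−y} as n → ∞. -/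
/-!
Write `L = log n`, so that `m / χ → β / α < 1`. Three facts give the limit.

* The sum `S m χ` is carried by its last terms: `S m χ / (χ ^ m / m!)` is the series
  `∑ j, m (m - 1) ⋯ (m - j) / χ ^ (j + 1)`, which by dominated convergence tends to the geometric
  series `∑ j, (β / α) ^ (j + 1) = β / (α - β)` (`tendsto_S_div`).
* Stirling's formula replaces `m!` by `√(2 π m) (m / e) ^ m`.
* It remains to see that `L + m log χ - m log m + m - χ - (log m) / 2` tends to `-y - (log β) / 2`.
  Put `m = L β (1 + v)` and `χ = L α (1 + u)`, and expand `log (1 + u)` and `log (1 + v)` to first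
  order. The terms of order zero cancel by the equation for `α`, the terms linear in `b` cancel by
  the choice of the coefficient of `b` in `χ`, and what is left of the linear terms is
  `(log L) / 2 - y`. The remainder is quadratic in `u`, `v`, multiplied by `L`, hence it tends to
  zero because `√L * u` and `√L * v` do (`tendsto_exponent`).
-/


open MeasureTheory Filter Real

/-- The ratio of the partial sum to the first omitted term, as a series whose terms vanish for
`j ≥ m`. -/
lemma S_eq_tsum (m : ℕ) {x : ℝ} (hx : x ≠ 0) :
    S m x = x ^ m / m.factorial * ∑' j : ℕ, (m.descFactorial (j + 1) : ℝ) / x ^ (j + 1) := by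
  rw [tsum_eq_sum (s := Finset.range m)]
  · unfold S
    rw [← Finset.sum_range_reflect, Finset.mul_sum]
    refine Finset.sum_congr rfl fun j hj => ?_
    have hj : j + 1 ≤ m := Finset.mem_range.mp hj
    have h1 : ((m - 1 - j).factorial : ℝ) * m.descFactorial (j + 1) = m.factorial := by
      have := Nat.factorial_mul_descFactorial hj
      rw [show m - (j + 1) = m - 1 - j by omega] at this
      exact_mod_cast this
    have h2 : x ^ m = x ^ (m - 1 - j) * x ^ (j + 1) := by
      rw [← pow_add]; congr 1; omega
    have h3 : ((m - 1 - j).factorial : ℝ) ≠ 0 := by positivity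
    have h4 : (m.factorial : ℝ) ≠ 0 := by positivity
    rw [h2]
    field_simp
    rw [← h1]
  · intro j hj
    rw [Finset.mem_range, not_lt] at hj
    rw [Nat.descFactorial_eq_zero_iff_lt.mpr (by omega)]
    simp

lemma descFactorial_div_le (m k : ℕ) {x : ℝ} (hx : 0 < x) :
    (m.descFactorial k : ℝ) / x ^ k ≤ (m / x) ^ k := by
  rw [div_pow]
  gcongr
  exact_mod_cast Nat.descFactorial_le_pow m k

lemma tendsto_descFactorial_div {m : ℕ → ℕ} {x : ℕ → ℝ} {r : ℝ}
    (hm : Tendsto m atTop atTop) (hx : Tendsto x atTop atTop)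
    (hr : Tendsto (fun n => (m n : ℝ) / x n) atTop (nhds r)) (k : ℕ) :
    Tendsto (fun n => ((m n).descFactorial k : ℝ) / x n ^ k) atTop (nhds (r ^ k)) := by
  induction k with
  | zero => simp
  | succ k ih =>
    have h1 : Tendsto (fun n => (m n : ℝ) / x n - k / x n) atTop (nhds r) := by
      simpa using hr.sub (hx.const_div_atTop (k : ℝ))
    rw [pow_succ']
    refine (h1.mul ih).congr' ?_
    filter_upwards [hm.eventually_ge_atTop k, hx.eventually_gt_atTop 0] with n hn hxn
    rw [Nat.descFactorial_succ, Nat.cast_mul, Nat.cast_sub hn]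
    field_simp
    ring

/-- If `m / x → r < 1`, the `m`-th partial sum of `e ^ x` is asymptotic to `r / (1 - r)` times the
first omitted term. -/
lemma tendsto_S_div {m : ℕ → ℕ} {x : ℕ → ℝ} {r : ℝ} (hr0 : 0 ≤ r) (hr1 : r < 1)
    (hm : Tendsto m atTop atTop) (hx : Tendsto x atTop atTop)
    (hr : Tendsto (fun n => (m n : ℝ) / x n) atTop (nhds r)) :
    Tendsto (fun n => S (m n) (x n) / (x n ^ m n / (m n).factorial)) atTop
      (nhds (r / (1 - r))) := by
  have hq1 : (r + 1) / 2 < 1 := by linarith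
  have hgeo : ∑' j : ℕ, r ^ (j + 1) = r / (1 - r) := by
    simp_rw [pow_succ']
    rw [tsum_mul_left, tsum_geometric_of_lt_one hr0 hr1, div_eq_mul_inv]
  rw [← hgeo]
  have key : Tendsto (fun n => ∑' j : ℕ, ((m n).descFactorial (j + 1) : ℝ) / x n ^ (j + 1)) atTop
      (nhds (∑' j : ℕ, r ^ (j + 1))) := by
    refine tendsto_tsum_of_dominated_convergence (bound := fun j => ((r + 1) / 2) ^ (j + 1)) ?_
      (fun j => tendsto_descFactorial_div hm hx hr (j + 1)) ?_
    · exact (summable_nat_add_iff 1).mpr (summable_geometric_of_lt_one (by linarith) hq1)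
    · filter_upwards [hx.eventually_gt_atTop 0,
        hr.eventually_le_const (show r < (r + 1) / 2 by linarith)] with n hxn hn j
      rw [Real.norm_of_nonneg (by positivity)]
      exact (descFactorial_div_le _ _ hxn).trans (by gcongr)
  refine key.congr' ?_
  filter_upwards [hx.eventually_gt_atTop 0] with n hxn
  rw [S_eq_tsum (m n) hxn.ne']
  have : x n ^ m n / ((m n).factorial : ℝ) ≠ 0 := by positivity
  field_simp

lemma tendsto_zero_of_mul {s t : ℕ → ℝ} (hs : Tendsto s atTop atTop)
    (hst : Tendsto (fun n => s n * t n) atTop (nhds 0)) : Tendsto t atTop (nhds 0) := by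
  refine (hst.div_atTop hs).congr' ?_
  filter_upwards [hs.eventually_gt_atTop 0] with n hn
  field_simp

/-- The first-order Taylor remainder of `log (1 + t)` is `o(1 / s²)` when `t = o(1 / s)`. -/
lemma tendsto_sq_mul_log_remainder {s t : ℕ → ℝ} (hs : Tendsto s atTop atTop)
    (hst : Tendsto (fun n => s n * t n) atTop (nhds 0)) :
    Tendsto (fun n => s n ^ 2 * (Real.log (1 + t n) - t n)) atTop (nhds 0) := by
  have ht := tendsto_zero_of_mul hs hst
  have hb : Tendsto (fun n => 2 * (s n * t n) ^ 2) atTop (nhds 0) := by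
    simpa using (hst.pow 2).const_mul 2
  refine squeeze_zero_norm' ?_ hb
  have habs : Tendsto (fun n => |t n|) atTop (nhds 0) := by simpa using ht.abs
  filter_upwards [habs.eventually_le_const (show (0 : ℝ) < 1 / 2 by norm_num)] with n hn
  have h := Real.abs_log_sub_add_sum_range_le (x := -t n) (by rw [abs_neg]; linarith) 1
  simp only [Finset.range_one, Finset.sum_singleton, abs_neg, sub_neg_eq_add] at h
  norm_num at h
  have h2 : |t n| ^ 2 / (1 - |t n|) ≤ 2 * t n ^ 2 := by
    rw [div_le_iff₀ (by linarith), sq_abs]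
    nlinarith [sq_nonneg (t n)]
  rw [Real.norm_eq_abs, abs_mul, abs_of_nonneg (sq_nonneg (s n))]
  have h3 : |Real.log (1 + t n) - t n| ≤ 2 * t n ^ 2 := by
    rw [sub_eq_neg_add]
    refine le_trans h ?_
    simpa using h2
  calc s n ^ 2 * |Real.log (1 + t n) - t n| ≤ s n ^ 2 * (2 * t n ^ 2) := by gcongr
    _ = _ := by ring

/-- The exponent left after Stirling's formula, in terms of the relative deviations `v` of `m` from
`β L` and `u` of `χ` from `α L`. The hypothesis `hlin` says that the linear terms add up to
`(log L) / 2 - y`. -/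
lemma tendsto_exponent {α β y : ℝ} (hβ : 0 < β) (hαβ : β < α)
    (hα : α - β * Real.log α = β - β * Real.log β + 1) {L u v M X : ℕ → ℝ}
    (hL : Tendsto L atTop atTop)
    (hu : Tendsto (fun n => √(L n) * u n) atTop (nhds 0))
    (hv : Tendsto (fun n => √(L n) * v n) atTop (nhds 0))
    (hM : ∀ᶠ n in atTop, M n = L n * (β * (1 + v n)))
    (hX : ∀ᶠ n in atTop, X n = L n * (α * (1 + u n)))
    (hlin : ∀ᶠ n in atTop, L n * ((α - β - 1) * v n - (α - β) * u n)
      = Real.log (L n) / 2 - y) :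
    Tendsto (fun n => L n + M n * Real.log (X n) - M n * Real.log (M n) + M n - X n
      - Real.log (M n) / 2) atTop (nhds (-y - Real.log β / 2)) := by
  have hα0 : 0 < α := hβ.trans hαβ
  have hs : Tendsto (fun n => √(L n)) atTop atTop := Real.tendsto_sqrt_atTop.comp hL
  have hu0 := tendsto_zero_of_mul hs hu
  have hv0 := tendsto_zero_of_mul hs hv
  have hru := tendsto_sq_mul_log_remainder hs hu
  have hrv := tendsto_sq_mul_log_remainder hs hv
  have h1v : Tendsto (fun n => β * (1 + v n)) atTop (nhds β) := by
    simpa using (hv0.const_add 1).const_mul β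
  have hlog : Tendsto (fun n => Real.log (β * (1 + v n))) atTop (nhds (Real.log β)) :=
    h1v.log hβ.ne'
  have hA := h1v.mul (hru.sub hrv)
  have hB := (hv.const_mul β).mul (hu.sub hv)
  have hlim := (((tendsto_const_nhds (x := -y)).add hA).add hB).sub (hlog.div_const 2)
  simp only [sub_zero, mul_zero, add_zero] at hlim
  refine hlim.congr' ?_
  filter_upwards [hM, hX, hlin, hL.eventually_gt_atTop 0,
    hu0.eventually_const_lt (show (-1 : ℝ) < 0 by norm_num),
    hv0.eventually_const_lt (show (-1 : ℝ) < 0 by norm_num)] with n h1 h2 h3 hLn hun hvn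
  have hun : 0 < 1 + u n := by linarith
  have hvn : 0 < 1 + v n := by linarith
  rw [h1, h2, Real.log_mul hLn.ne' (by positivity), Real.log_mul hLn.ne' (by positivity),
    Real.log_mul hβ.ne' hvn.ne', Real.log_mul hα0.ne' hun.ne']
  have hsq : √(L n) ^ 2 = L n := Real.sq_sqrt hLn.le
  have hB' : β * (√(L n) * v n) * (√(L n) * u n - √(L n) * v n)
      = L n * (β * v n * (u n - v n)) := by
    linear_combination (β * v n * (u n - v n)) * hsq
  rw [hB', hsq]
  linear_combination -h3 + L n * (1 + v n) * hα

/-- Stirling's formula and `tendsto_S_div` combined: the limit of `n S_m(x) e^{-x}` from that of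
the exponent. -/
lemma tendsto_of_exponent {m : ℕ → ℕ} {x : ℕ → ℝ} {r E : ℝ} (hr0 : 0 ≤ r) (hr1 : r < 1)
    (hm : Tendsto m atTop atTop) (hx : Tendsto x atTop atTop)
    (hr : Tendsto (fun n => (m n : ℝ) / x n) atTop (nhds r))
    (hE : Tendsto (fun n : ℕ => Real.log n + m n * Real.log (x n) - m n * Real.log (m n) + m n - x n
      - Real.log (m n) / 2) atTop (nhds E)) :
    Tendsto (fun n : ℕ => (n : ℝ) * S (m n) (x n) * Real.exp (-x n)) atTop
      (nhds (r / (1 - r) * (√π)⁻¹ * (√2)⁻¹ * Real.exp E)) := by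
  have hst := (Stirling.tendsto_stirlingSeq_sqrt_pi.comp hm).inv₀
    (Real.sqrt_pos.mpr Real.pi_pos).ne'
  have hexp := (Real.continuous_exp.tendsto E).comp hE
  refine ((((tendsto_S_div hr0 hr1 hm hx hr).mul hst).mul_const (√2)⁻¹).mul hexp).congr' ?_
  filter_upwards [eventually_gt_atTop 0, hm.eventually_gt_atTop 0, hx.eventually_gt_atTop 0]
    with n hn hmn hxn
  have hn' : (0 : ℝ) < n := by exact_mod_cast hn
  have hm' : (0 : ℝ) < m n := by exact_mod_cast hmn
  have e1 : Real.exp (m n * Real.log (x n)) = x n ^ m n := by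
    rw [Real.exp_nat_mul, Real.exp_log hxn]
  have e2 : Real.exp (m n * Real.log (m n)) = (m n : ℝ) ^ m n := by
    rw [Real.exp_nat_mul, Real.exp_log hm']
  have e3 : Real.exp (m n) = Real.exp 1 ^ m n := by rw [← Real.exp_nat_mul, mul_one]
  have e4 : Real.exp (Real.log (m n) / 2) = √(m n) := by
    rw [Real.exp_half, Real.exp_log hm']
  simp only [Function.comp_apply, Stirling.stirlingSeq]
  rw [Real.exp_sub, Real.exp_sub, Real.exp_add, Real.exp_sub, Real.exp_add, Real.exp_log hn',
    e1, e2, e3, e4, Real.exp_neg, Real.sqrt_mul (by norm_num), div_pow]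
  have : √(2 : ℝ) ≠ 0 := by positivity
  have : √(m n : ℝ) ≠ 0 := by positivity
  field_simp

/-- Critical case `m = β ln n + b(n) ln n` with `b(n) = o(1/√(ln n))`: with
`χ(n) = α ln n + (α(α−β−1)/(β(α−β))) b(n) ln n − (α/(2(α−β))) ln ln n + (α/(α−β)) y`,
one has `n S_m(χ) e^{−χ} → (1/√(2π)) (√β/(α−β)) e^{−y}`. -/
theorem stmt10 (β : ℝ) (hβ : 0 < β)
    (α : ℝ) (hαβ : β < α)
    (hα : α - β * Real.log α = β - β * Real.log β + 1)
    (b : ℕ → ℝ) (m : ℕ → ℕ) (hm : ∀ n, 0 < m n)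
    (hmeq : ∀ᶠ n : ℕ in atTop, (m n : ℝ) = β * Real.log n + b n * Real.log n)
    (hb : Tendsto (fun n : ℕ => b n * Real.sqrt (Real.log n)) atTop (nhds 0))
    (y : ℝ) :
    Tendsto (fun n : ℕ =>
        (n : ℝ) * S (m n)
            (α * Real.log n + α * (α - β - 1) / (β * (α - β)) * b n * Real.log n
              - α / (2 * (α - β)) * Real.log (Real.log n) + α / (α - β) * y)
          * Real.exp
            (-(α * Real.log n + α * (α - β - 1) / (β * (α - β)) * b n * Real.log n
              - α / (2 * (α - β)) * Real.log (Real.log n) + α / (α - β) * y)))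
      atTop (nhds (1 / Real.sqrt (2 * π) * (Real.sqrt β / (α - β)) * Real.exp (-y))) := by
  have hα0 : 0 < α := hβ.trans hαβ
  have hd : 0 < α - β := sub_pos.mpr hαβ
  set L : ℕ → ℝ := fun n => Real.log n with hLdef
  set X : ℕ → ℝ := fun n => α * Real.log n + α * (α - β - 1) / (β * (α - β)) * b n * Real.log n
    - α / (2 * (α - β)) * Real.log (Real.log n) + α / (α - β) * y with hXdef
  have hL : Tendsto L atTop atTop := Real.tendsto_log_atTop.comp tendsto_natCast_atTop_atTop
  have hs : Tendsto (fun n => √(L n)) atTop atTop := Real.tendsto_sqrt_atTop.comp hL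
  set v : ℕ → ℝ := fun n => b n / β with hvdef
  set u : ℕ → ℝ := fun n => (α - β - 1) / (α - β) * v n
    + (y - Real.log (L n) / 2) / (α - β) / L n with hudef
  have hv : Tendsto (fun n => √(L n) * v n) atTop (nhds 0) := by
    have := hb.div_const β
    rw [zero_div] at this
    refine this.congr fun n => ?_
    simp only [hvdef, hLdef]
    ring
  have hu : Tendsto (fun n => √(L n) * u n) atTop (nhds 0) := by
    have hlog : Tendsto (fun n => Real.log (√(L n)) / √(L n)) atTop (nhds 0) :=
      Real.isLittleO_log_id_atTop.tendsto_div_nhds_zero.comp hs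
    have h := (hv.const_mul ((α - β - 1) / (α - β))).add
      (((hs.const_div_atTop y).sub hlog).div_const (α - β))
    simp only [mul_zero, sub_zero, zero_div, add_zero] at h
    refine h.congr' ?_
    filter_upwards [hL.eventually_gt_atTop 0] with n hn
    have hsn : 0 < √(L n) := Real.sqrt_pos.mpr hn
    have hsq : L n = √(L n) ^ 2 := (Real.sq_sqrt hn.le).symm
    have hdiv (a : ℝ) : √(L n) * (a / L n) = a / √(L n) := by
      rw [eq_div_iff hsn.ne', div_eq_mul_inv]
      field_simp
      rw [← hsq, mul_comm]
    simp only [hudef]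
    rw [mul_add, hdiv, Real.log_sqrt hn.le]
    field_simp
  have hM : ∀ᶠ n in atTop, (m n : ℝ) = L n * (β * (1 + v n)) := by
    filter_upwards [hmeq] with n hn
    rw [hn]
    simp only [hvdef, hLdef]
    field_simp
  have hX : ∀ᶠ n in atTop, X n = L n * (α * (1 + u n)) := by
    filter_upwards [hL.eventually_gt_atTop 0] with n hn
    have hn' : Real.log n ≠ 0 := hn.ne'
    simp only [hXdef, hudef, hvdef, hLdef]
    field_simp
    ring
  have hlin : ∀ᶠ n in atTop, L n * ((α - β - 1) * v n - (α - β) * u n)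
      = Real.log (L n) / 2 - y := by
    filter_upwards [hL.eventually_gt_atTop 0] with n hn
    simp only [hudef]
    field_simp
    ring
  have hE := tendsto_exponent hβ hαβ hα hL hu hv hM hX hlin
  have hv1 : Tendsto (fun n => β * (1 + v n)) atTop (nhds β) := by
    simpa using ((tendsto_zero_of_mul hs hv).const_add 1).const_mul β
  have hu1 : Tendsto (fun n => α * (1 + u n)) atTop (nhds α) := by
    simpa using ((tendsto_zero_of_mul hs hu).const_add 1).const_mul α
  have hmt : Tendsto m atTop atTop := by
    rw [← tendsto_natCast_atTop_iff (R := ℝ)]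
    exact (hL.atTop_mul_pos hβ hv1).congr' (hM.mono fun n h => h.symm)
  have hXt : Tendsto X atTop atTop :=
    (hL.atTop_mul_pos hα0 hu1).congr' (hX.mono fun n h => h.symm)
  have hr : Tendsto (fun n => (m n : ℝ) / X n) atTop (nhds (β / α)) := by
    refine (hv1.div hu1 hα0.ne').congr' ?_
    filter_upwards [hM, hX, hL.eventually_gt_atTop 0] with n h1 h2 hn
    rw [h1, h2, mul_div_mul_left _ _ hn.ne']
    rfl
  have hmain := tendsto_of_exponent (by positivity) ((div_lt_one hα0).mpr hαβ) hmt hXt hr hE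
  convert hmain using 2
  have hsb : √β ^ 2 = β := Real.sq_sqrt hβ.le
  rw [Real.exp_sub, Real.exp_half, Real.exp_log hβ, Real.sqrt_mul (by norm_num)]
  have h1 : β / α / (1 - β / α) = √β ^ 2 / (α - β) := by
    rw [hsb]
    field_simp
  have h2 : √β ≠ 0 := by positivity
  have h3 : √π ≠ 0 := by positivity
  rw [h1]
  field_simp
end
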